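/- For every x ∈ ℝ with f_r(x) > 0, every integer k ≥ 3, and every ε with 0 ≤ ε ≤ r/2: if s_r(x+ε) ≥ max(2√k + 2, 9.5)/r, then f_r(x)·|s_r(x+ε)|^k ≤ (1/5)·max( f_r(x−ε)·|s_r(x−ε)|^k , f_r(x+ε+r)·|s_r(x+ε+r)|^k ). -/

import Mathlib

/-!
Write `F = f_r` and `s = F'/F`. The function `log F + x²/(2r²)` is the logarithm of a Laplace
transform, hence convex; its tangent inequality reads
`F (a + h) ≥ F a * exp (h * s a - h² / (2r²))` (`smoothed_tangent`), and using it in both directions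
shows that `s a + a / r²` is nondecreasing (`score_mono`).

Put `σ = r * s (x + ε) ≥ max (2√k + 2) 9.5`, and compare `F (x + ε)` with `exp (-(σ+1)/2) * F x`.

* If `F (x + ε)` is at least that, step to the right by `r`: `F` gains a factor `exp (σ - 1/2)`, while
  the score loses at most `1/r`, which costs a factor `(1 - 1/σ)^k ≥ exp (-k/(σ-1))`. As
  `4k ≤ (σ-2)²`, the net factor is at least `exp 2 ≥ 5`.
* Otherwise `F` drops sharply on `[x, x + ε]`, so `s x`, and by monotonicity also `s (x - ε)`, is very
  negative, `s (x - ε) ≤ -σ / r`; and `F (x - ε)` exceeds `F x` by a factor at least `exp 5 ≥ 5`.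
-/

open MeasureTheory Real

noncomputable section

/-- The Gaussian density with mean 0 and variance `r ^ 2`. -/
def gaussPdf (r x : ℝ) : ℝ :=
  Real.exp (-(x ^ 2) / (2 * r ^ 2)) / Real.sqrt (2 * Real.pi * r ^ 2)

/-- The `r`-smoothed density `f_r`, i.e. the density of `Y + Z` where `Y ~ f` and
`Z ~ N(0, r²)` independent. -/
def smoothed (f : ℝ → ℝ) (r x : ℝ) : ℝ := ∫ y, f y * gaussPdf r (x - y)

/-- The score function `s_r = f_r' / f_r` of the smoothed density. -/
def score (f : ℝ → ℝ) (r x : ℝ) : ℝ :=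
  deriv (fun t => smoothed f r t) x / smoothed f r x

/-- The Fisher information `I_r = E_{x ~ f_r}[s_r(x)²]` of the smoothed density. -/
def fisherInfo (f : ℝ → ℝ) (r : ℝ) : ℝ := ∫ x, score f r x ^ 2 * smoothed f r x

/-- `f` is a probability density on `ℝ`. -/
def IsDensity (f : ℝ → ℝ) : Prop :=
  (∀ x, 0 ≤ f x) ∧ MeasureTheory.Integrable f ∧ (∫ x, f x) = 1

lemma gaussPdf_pos {r : ℝ} (hr : 0 < r) (x : ℝ) : 0 < gaussPdf r x := by
  unfold gaussPdf; positivity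

lemma gaussPdf_le {r : ℝ} (hr : 0 < r) (x : ℝ) :
    gaussPdf r x ≤ 1 / √(2 * π * r ^ 2) := by
  unfold gaussPdf
  gcongr
  rw [Real.exp_le_one_iff, neg_div, neg_nonpos]
  positivity

lemma hasDerivAt_gaussPdf {r : ℝ} (hr : 0 < r) (x y : ℝ) :
    HasDerivAt (fun t => gaussPdf r (t - y)) (gaussPdf r (x - y) * ((y - x) / r ^ 2)) x := by
  unfold gaussPdf
  have h1 : HasDerivAt (fun t : ℝ => -((t - y) ^ 2) / (2 * r ^ 2))
      ((y - x) / r ^ 2) x := by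
    have := ((((hasDerivAt_id x).sub_const y).pow 2).neg.div_const (2 * r ^ 2))
    refine (this.congr_deriv ?_)
    simp only [id]
    push_cast
    field_simp
    ring
  refine (h1.exp.div_const (√(2 * π * r ^ 2))).congr_deriv ?_
  exact mul_div_right_comm _ _ _

/-- The derivative of the Gaussian density is bounded; this follows from `v ≤ exp (v²/2)`. -/
lemma abs_deriv_gaussPdf_le {r : ℝ} (hr : 0 < r) (x y : ℝ) :
    |gaussPdf r (x - y) * ((y - x) / r ^ 2)| ≤ 1 / r / √(2 * π * r ^ 2) := by
  rw [abs_mul, abs_of_pos (gaussPdf_pos hr _)]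
  unfold gaussPdf
  rw [div_mul_eq_mul_div]
  gcongr
  rw [neg_div, Real.exp_neg, inv_mul_le_iff₀ (Real.exp_pos _), abs_div,
    abs_of_pos (show 0 < r ^ 2 by positivity)]
  have h1 := Real.add_one_le_exp ((x - y) ^ 2 / (2 * r ^ 2))
  have h2 : |y - x| / r ^ 2 ≤ ((x - y) ^ 2 / (2 * r ^ 2) + 1) * (1 / r) := by
    have h3 : ((x - y) ^ 2 / (2 * r ^ 2) + 1) * (1 / r) - |y - x| / r ^ 2
        = ((|y - x| - r) ^ 2 + r ^ 2) / (2 * r ^ 3) := by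
      rw [sub_sq |y - x|, sq_abs]
      field_simp
      ring
    have : 0 ≤ ((|y - x| - r) ^ 2 + r ^ 2) / (2 * r ^ 3) := by positivity
    linarith
  exact h2.trans (by gcongr)

@[fun_prop]
lemma continuous_gaussPdf (r : ℝ) : Continuous (gaussPdf r) := by
  unfold gaussPdf; fun_prop

lemma integrable_smoothed {f : ℝ → ℝ} {r : ℝ} (hf : Integrable f) (hr : 0 < r) (x : ℝ) :
    Integrable (fun y => f y * gaussPdf r (x - y)) := by
  refine hf.mul_bdd (c := 1 / √(2 * π * r ^ 2)) (by fun_prop) (Filter.Eventually.of_forall ?_)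
  intro y
  rw [Real.norm_eq_abs, abs_of_pos (gaussPdf_pos hr _)]
  exact gaussPdf_le hr _

lemma hasDerivAt_smoothed {f : ℝ → ℝ} {r : ℝ} (hf : Integrable f) (hr : 0 < r) (x : ℝ) :
    Integrable (fun y => f y * (gaussPdf r (x - y) * ((y - x) / r ^ 2))) ∧
    HasDerivAt (fun t => smoothed f r t)
      (∫ y, f y * (gaussPdf r (x - y) * ((y - x) / r ^ 2))) x := by
  refine hasDerivAt_integral_of_dominated_loc_of_deriv_le
    (bound := fun y => |f y| * (1 / r / √(2 * π * r ^ 2)))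
    (F' := fun t y => f y * (gaussPdf r (t - y) * ((y - t) / r ^ 2)))
    (s := Set.univ) Filter.univ_mem ?_ ?_ ?_ ?_ ?_ ?_
  · exact Filter.Eventually.of_forall fun t => (integrable_smoothed hf hr t).aestronglyMeasurable
  · exact integrable_smoothed hf hr x
  · exact hf.aestronglyMeasurable.mul (by fun_prop)
  · refine Filter.Eventually.of_forall fun y t _ => ?_
    rw [Real.norm_eq_abs, abs_mul]
    exact mul_le_mul_of_nonneg_left (abs_deriv_gaussPdf_le hr t y) (abs_nonneg _)
  · exact hf.abs.mul_const _
  · exact Filter.Eventually.of_forall fun y t _ => (hasDerivAt_gaussPdf hr t y).const_mul _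

/-- Tangent inequality for the convex function `log f_r + x²/(2r²)`, in exponentiated form. It is
Jensen's inequality for `exp` under the law of `Y` given `X = a`. -/
lemma smoothed_tangent {f : ℝ → ℝ} {r : ℝ} (hf : IsDensity f) (hr : 0 < r) {a : ℝ}
    (ha : 0 < smoothed f r a) (h : ℝ) :
    smoothed f r a * Real.exp (h * score f r a - h ^ 2 / (2 * r ^ 2)) ≤ smoothed f r (a + h) := by
  obtain ⟨hi, hd⟩ := hasDerivAt_smoothed hf.2.1 hr a
  have hi0 := integrable_smoothed hf.2.1 hr a
  set D := ∫ y, f y * (gaussPdf r (a - y) * ((y - a) / r ^ 2)) with hD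
  have hs : score f r a = D / smoothed f r a := by rw [score, hd.deriv]
  set c := h * score f r a with hc
  set E := Real.exp (c - h ^ 2 / (2 * r ^ 2)) with hE
  have key : ∫ y, (E * (1 - c) * (f y * gaussPdf r (a - y))
      + E * h * (f y * (gaussPdf r (a - y) * ((y - a) / r ^ 2)))) ≤ smoothed f r (a + h) := by
    refine integral_mono ((hi0.const_mul _).add (hi.const_mul _))
      (integrable_smoothed hf.2.1 hr (a + h)) fun y => ?_
    have e1 : gaussPdf r (a + h - y)
        = gaussPdf r (a - y) * (E * Real.exp (h * ((y - a) / r ^ 2) - c)) := by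
      rw [hE, ← Real.exp_add]
      unfold gaussPdf
      rw [div_mul_eq_mul_div, ← Real.exp_add]
      congr 2
      field_simp
      ring
    have e2 := Real.add_one_le_exp (h * ((y - a) / r ^ 2) - c)
    have e3 : 0 ≤ f y * gaussPdf r (a - y) * E :=
      mul_nonneg (mul_nonneg (hf.1 y) (gaussPdf_pos hr _).le) (Real.exp_pos _).le
    have e4 := mul_le_mul_of_nonneg_left e2 e3
    simp only
    rw [e1]
    linarith
  rw [integral_add (hi0.const_mul _) (hi.const_mul _), integral_const_mul, integral_const_mul,
    ← hD] at key
  have hDs : h * D = c * smoothed f r a := by rw [hc, hs]; field_simp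
  have : E * (1 - c) * smoothed f r a + E * h * D = smoothed f r a * E := by
    linear_combination E * hDs
  calc _ = E * (1 - c) * smoothed f r a + E * h * D := this.symm
    _ ≤ _ := key

lemma smoothed_pos_add {f : ℝ → ℝ} {r : ℝ} (hf : IsDensity f) (hr : 0 < r) {a : ℝ}
    (ha : 0 < smoothed f r a) (h : ℝ) : 0 < smoothed f r (a + h) :=
  lt_of_lt_of_le (by positivity) (smoothed_tangent hf hr ha h)

/-- `score f r a + a / r²` is nondecreasing in `a`. -/
lemma score_mono {f : ℝ → ℝ} {r : ℝ} (hf : IsDensity f) (hr : 0 < r) {a : ℝ}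
    (ha : 0 < smoothed f r a) {h : ℝ} (hh : 0 < h) :
    score f r a - h / r ^ 2 ≤ score f r (a + h) := by
  have hb := smoothed_pos_add hf hr ha h
  have h1 := smoothed_tangent hf hr ha h
  have h2 := smoothed_tangent hf hr hb (-h)
  rw [add_neg_cancel_right] at h2
  set A := smoothed f r a
  set B := smoothed f r (a + h)
  have h3 : A * (Real.exp (h * score f r a - h ^ 2 / (2 * r ^ 2)) *
      Real.exp (-h * score f r (a + h) - (-h) ^ 2 / (2 * r ^ 2))) ≤ A := by
    rw [← mul_assoc]
    exact (mul_le_mul_of_nonneg_right h1 (Real.exp_pos _).le).trans h2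
  rw [← Real.exp_add, mul_le_iff_le_one_right ha, Real.exp_le_one_iff] at h3
  have h4 : h * (score f r a - h / r ^ 2 - score f r (a + h)) ≤ 0 := by
    refine le_trans (le_of_eq ?_) h3
    field_simp
    ring
  exact sub_nonpos.1 (nonpos_of_mul_nonpos_right h4 hh)

lemma five_le_exp {u : ℝ} (hu : 2 ≤ u) : 5 ≤ Real.exp u := by
  have h1 : Real.exp 2 = Real.exp 1 * Real.exp 1 := by rw [← Real.exp_add]; norm_num
  have h2 := Real.exp_one_gt_d9
  have h3 : Real.exp 2 ≤ Real.exp u := Real.exp_le_exp.2 hu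
  nlinarith

/-- Numerical core of the step to the right by `r`. -/
lemma five_le_exp_mul_pow {σ : ℝ} {k : ℕ} (h1 : 2 * √k + 2 ≤ σ) (h2 : 9.5 ≤ σ) :
    5 ≤ Real.exp (σ / 2 - 1) * (1 - 1 / σ) ^ k := by
  norm_num at h2
  have hσ : 0 < σ - 1 := by linarith
  have hσ0 : 0 < σ := by linarith
  have hk : 4 * (k : ℝ) ≤ (σ - 2) ^ 2 := by
    have := Real.sq_sqrt (Nat.cast_nonneg (α := ℝ) k)
    nlinarith [Real.sqrt_nonneg (k : ℝ)]
  have hq : Real.exp (-(1 / (σ - 1))) ≤ 1 - 1 / σ := by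
    have e : 1 - 1 / σ = (1 / (σ - 1) + 1)⁻¹ := by field_simp; ring
    rw [e, Real.exp_neg]
    gcongr
    exact Real.add_one_le_exp _
  have hq' : Real.exp (-(k / (σ - 1))) ≤ (1 - 1 / σ) ^ k := by
    have := pow_le_pow_left₀ (Real.exp_pos _).le hq k
    rw [← Real.exp_nat_mul] at this
    refine le_trans (le_of_eq ?_) this
    congr 1
    ring
  have hle : (k : ℝ) / (σ - 1) ≤ σ / 2 - 3 := by
    rw [div_le_iff₀ hσ]
    nlinarith
  calc (5 : ℝ) ≤ Real.exp ((σ / 2 - 1) + -(k / (σ - 1))) := five_le_exp (by linarith)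
    _ ≤ _ := by rw [Real.exp_add]; gcongr

/-- Pointwise helper bound: if the score at `x + ε` is large (for `0 ≤ ε ≤ r/2`), then
the weighted `k`-th power of the score at `x` is dominated by a nearby point. -/
theorem score_large_pos_eps_helper (f : ℝ → ℝ) (r : ℝ) (hf : IsDensity f) (hr : 0 < r)
    (x : ℝ) (hx : 0 < smoothed f r x) (k : ℕ) (hk : 3 ≤ k)
    (ε : ℝ) (hε0 : 0 ≤ ε) (hεr : ε ≤ r / 2)
    (hs : max (2 * Real.sqrt k + 2) 9.5 / r ≤ score f r (x + ε)) :
    smoothed f r x * |score f r (x + ε)| ^ k ≤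
      (1 / 5) * max (smoothed f r (x - ε) * |score f r (x - ε)| ^ k)
        (smoothed f r (x + ε + r) * |score f r (x + ε + r)| ^ k) := by
  have hxε := smoothed_pos_add hf hr hx ε
  set S := score f r (x + ε) with hS
  rw [div_le_iff₀ hr] at hs
  have hσ1 : 2 * √k + 2 ≤ S * r := (le_max_left _ _).trans hs
  have hσ2 : 9.5 ≤ S * r := (le_max_right _ _).trans hs
  have hσ3 : (19 : ℝ) / 2 ≤ S * r := by norm_num at hσ2; exact hσ2
  have hS0 : 0 < S := pos_of_mul_pos_left (by linarith) hr.le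
  rw [abs_of_pos hS0]
  by_cases hc : smoothed f r x * Real.exp (-(S * r + 1) / 2) ≤ smoothed f r (x + ε)
  · have hF := smoothed_tangent hf hr hxε r
    have hmono := score_mono hf hr hxε hr
    rw [← hS] at hF hmono
    have hq0 : 0 ≤ 1 - 1 / (S * r) := by
      rw [sub_nonneg, div_le_one (by linarith)]; linarith
    have e1 : S - r / r ^ 2 = S * (1 - 1 / (S * r)) := by field_simp
    rw [e1] at hmono
    have hp : (S * (1 - 1 / (S * r))) ^ k ≤ |score f r (x + ε + r)| ^ k :=
      pow_le_pow_left₀ (by positivity) (hmono.trans (le_abs_self _)) k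
    have hF2 : smoothed f r x * Real.exp (S * r / 2 - 1) ≤ smoothed f r (x + ε + r) := by
      refine le_trans ?_ hF
      refine le_trans (le_of_eq ?_) (mul_le_mul_of_nonneg_right hc (Real.exp_pos _).le)
      rw [mul_assoc, ← Real.exp_add]
      congr 2
      field_simp
      ring
    have h5 := mul_le_mul_of_nonneg_left (five_le_exp_mul_pow hσ1 hσ2)
      (mul_nonneg hx.le (pow_nonneg hS0.le k))
    have h6 := mul_le_mul hF2 hp (by positivity) (smoothed_pos_add hf hr hxε r).le
    rw [mul_pow] at h6
    have := le_max_right (smoothed f r (x - ε) * |score f r (x - ε)| ^ k)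
        (smoothed f r (x + ε + r) * |score f r (x + ε + r)| ^ k)
    linarith
  · push Not at hc
    have hε : 0 < ε := by
      rcases hε0.lt_or_eq with h | h
      · exact h
      · exfalso
        rw [← h, add_zero] at hc
        have : Real.exp (-(S * r + 1) / 2) ≤ 1 := by rw [Real.exp_le_one_iff]; linarith
        nlinarith
    have hsmall : ε ^ 2 / r ^ 2 ≤ 1 / 4 := by
      rw [div_le_iff₀ (by positivity)]; nlinarith
    have h1 := smoothed_tangent hf hr hx ε
    have h2 := smoothed_tangent hf hr hx (-ε)
    rw [← sub_eq_add_neg] at h2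
    have hxm : 0 < smoothed f r (x - ε) := by
      rw [sub_eq_add_neg]; exact smoothed_pos_add hf hr hx _
    -- the drop of `f_r` on `[x, x + ε]` bounds the score at `x` from above
    have hexp : ε * score f r x - ε ^ 2 / (2 * r ^ 2) < -(S * r + 1) / 2 :=
      Real.exp_lt_exp.1 (lt_of_mul_lt_mul_left (h1.trans_lt hc) hx.le)
    have hhalf : ε ^ 2 / (2 * r ^ 2) = ε ^ 2 / r ^ 2 / 2 := by field_simp
    have hmono := score_mono hf hr hxm hε
    rw [sub_add_cancel] at hmono
    have hεs : ε * score f r (x - ε) ≤ -(S * r) / 2 := by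
      have := mul_le_mul_of_nonneg_left hmono hε.le
      have e : ε * (score f r (x - ε) - ε / r ^ 2) = ε * score f r (x - ε) - ε ^ 2 / r ^ 2 := by
        ring
      rw [e] at this
      linarith
    have hSm : S ≤ |score f r (x - ε)| := by
      rw [le_abs]
      right
      have : ε * S ≤ ε * -score f r (x - ε) := by nlinarith
      exact le_of_mul_le_mul_left this hε
    have h5 : 5 ≤ Real.exp (-ε * score f r x - (-ε) ^ 2 / (2 * r ^ 2)) := by
      apply five_le_exp
      rw [neg_sq, hhalf]
      linarith
    have h6 : smoothed f r x * 5 ≤ smoothed f r (x - ε) :=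
      (mul_le_mul_of_nonneg_left h5 hx.le).trans h2
    have h7 := mul_le_mul h6 (pow_le_pow_left₀ hS0.le hSm k) (by positivity) hxm.le
    have := le_max_left (smoothed f r (x - ε) * |score f r (x - ε)| ^ k)
        (smoothed f r (x + ε + r) * |score f r (x + ε + r)| ^ k)
    linarith

end
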